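/- For every u ∈ ℝ⁷ the following identities hold: φ ∧ i(u)(*₇φ) = −4·*₇(u♭); (*₇φ) ∧ i(u)φ = 3·*₇(u♭); and φ ∧ i(u)φ = 2·*₇(i(u)φ) = 2·u♭ ∧ *₇φ. -/

import Mathlib

open scoped BigOperators

noncomputable section

namespace FMpaper

variable {K : Type*} [NormedField K] [NormedAlgebra ℝ K]

/-- Coefficient model for the exterior algebra of `(ℝⁿ)*` with scalars in `K`:
a form is given by its coefficients on the basis `e^S`, `S ⊆ {0, …, n-1}` sorted. -/
abbrev Form (K : Type*) (n : ℕ) := Finset (Fin n) → K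

variable {n : ℕ}

/-- Sign such that `e^s ∧ e^t = signMerge s t • e^(s ∪ t)` for disjoint sorted `s, t`. -/
def signMerge (s t : Finset (Fin n)) : K :=
  (-1 : K) ^ (((s ×ˢ t).filter (fun p => p.2 < p.1)).card)

/-- Wedge product. -/
def wedge (α β : Form K n) : Form K n :=
  fun u => ∑ s ∈ u.powerset, signMerge s (u \ s) * α s * β (u \ s)

/-- Hodge star operator (for the standard inner product and orientation `e^{0⋯(n-1)}`). -/
def hstar (α : Form K n) : Form K n :=
  fun t => signMerge tᶜ t * α tᶜ

/-- Interior product with the basis vector `e_μ`. -/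
def iprodB (μ : Fin n) (α : Form K n) : Form K n :=
  fun t => if μ ∈ t then 0
    else (-1 : K) ^ ((t.filter (fun j => j < μ)).card) * α (insert μ t)

/-- Interior product with the vector `v`. -/
def iprod (v : Fin n → K) (α : Form K n) : Form K n :=
  fun t => ∑ μ, v μ * iprodB μ α t

/-- The basis covector `e^i` as a 1-form. -/
def e1 (i : Fin n) : Form K n := fun s => if s = {i} then 1 else 0

/-- The covector `v♭` dual to a vector `v`. -/
def flat (v : Fin n → K) : Form K n := ∑ i, v i • e1 i

/-- The vector `α♯` dual to a 1-form `α`. -/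
def sharp1 (α : Form K n) : Fin n → K := fun i => α {i}

/-- The inner product of forms (extended `K`-bilinearly). -/
def inner' (α β : Form K n) : K := ∑ s, α s * β s

/-- The (Euclidean) norm of a form; for an `√-1 ℝ`-valued form `√-1 γ` this is `‖γ‖`. -/
def fnorm (α : Form K n) : ℝ := Real.sqrt (∑ s, ‖α s‖ ^ 2)

/-- `α` is homogeneous of degree `k`. -/
def isGrade (k : ℕ) (α : Form K n) : Prop := ∀ s, s.card ≠ k → α s = 0

/-- Evaluation of a `k`-form on `k` vectors. -/
def evalForm {k : ℕ} (α : Form K n) (v : Fin k → (Fin n → K)) : K :=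
  ∑ s : Finset (Fin n), α s *
    (if h : s.card = k then
      Matrix.det (Matrix.of fun i j => v i ((s.orderIsoOfFin h j : Fin n))) else 0)

/-- The matrix of the skew-symmetric endomorphism `γ♯` associated with a 2-form `γ`
via `⟨γ♯ u, v⟩ = γ(u, v)`. -/
def mat2 (γ : Form K n) : Matrix (Fin n) (Fin n) K :=
  Matrix.of fun i j => if i < j then γ {i, j} else if j < i then - γ {i, j} else 0

/-- The standard `G₂` 3-form `φ = e^{123}+e^{145}+e^{167}+e^{246}−e^{257}−e^{347}−e^{356}`
on `ℝ⁷` (indices `1, …, 7` shifted to `0, …, 6`). -/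
def phi7 : Form K 7 := fun s =>
  if s = ({0, 1, 2} : Finset (Fin 7)) then 1
  else if s = ({0, 3, 4} : Finset (Fin 7)) then 1
  else if s = ({0, 5, 6} : Finset (Fin 7)) then 1
  else if s = ({1, 3, 5} : Finset (Fin 7)) then 1
  else if s = ({1, 4, 6} : Finset (Fin 7)) then -1
  else if s = ({2, 3, 6} : Finset (Fin 7)) then -1
  else if s = ({2, 4, 5} : Finset (Fin 7)) then -1
  else 0

/-- `*₇φ = e^{4567}+e^{2367}+e^{2345}+e^{1357}−e^{1346}−e^{1256}−e^{1247}` on `ℝ⁷`. -/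
def psi7 : Form K 7 := fun s =>
  if s = ({3, 4, 5, 6} : Finset (Fin 7)) then 1
  else if s = ({1, 2, 5, 6} : Finset (Fin 7)) then 1
  else if s = ({1, 2, 3, 4} : Finset (Fin 7)) then 1
  else if s = ({0, 2, 4, 6} : Finset (Fin 7)) then 1
  else if s = ({0, 2, 3, 5} : Finset (Fin 7)) then -1
  else if s = ({0, 1, 4, 5} : Finset (Fin 7)) then -1
  else if s = ({0, 1, 3, 6} : Finset (Fin 7)) then -1
  else 0

/-- The `G₂` 3-form `φ` on `V = span{e₁, …, e₇} ⊂ ℝ⁸`, regarded as a form on `ℝ⁸`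
annihilated by `i(e₀)` (indices `1, …, 7` of `ℝ⁸`). -/
def phi8 : Form K 8 := fun s =>
  if s = ({1, 2, 3} : Finset (Fin 8)) then 1
  else if s = ({1, 4, 5} : Finset (Fin 8)) then 1
  else if s = ({1, 6, 7} : Finset (Fin 8)) then 1
  else if s = ({2, 4, 6} : Finset (Fin 8)) then 1
  else if s = ({2, 5, 7} : Finset (Fin 8)) then -1
  else if s = ({3, 4, 7} : Finset (Fin 8)) then -1
  else if s = ({3, 5, 6} : Finset (Fin 8)) then -1
  else 0

/-- `*₇φ` on `V ⊂ ℝ⁸`, regarded as a 4-form on `ℝ⁸` annihilated by `i(e₀)`. -/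
def psi8 : Form K 8 := fun s =>
  if s = ({4, 5, 6, 7} : Finset (Fin 8)) then 1
  else if s = ({2, 3, 6, 7} : Finset (Fin 8)) then 1
  else if s = ({2, 3, 4, 5} : Finset (Fin 8)) then 1
  else if s = ({1, 3, 5, 7} : Finset (Fin 8)) then 1
  else if s = ({1, 3, 4, 6} : Finset (Fin 8)) then -1
  else if s = ({1, 2, 5, 6} : Finset (Fin 8)) then -1
  else if s = ({1, 2, 4, 7} : Finset (Fin 8)) then -1
  else 0

/-- The standard Cayley 4-form `Φ = e⁰ ∧ φ + *₇φ` on `ℝ⁸`. -/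
def Phi8 : Form K 8 := wedge (e1 0) phi8 + psi8

/-- The index set of `V = span{e₁, …, e₇} ⊂ ℝ⁸`. -/
def Vset : Finset (Fin 8) := {1, 2, 3, 4, 5, 6, 7}

/-- The Hodge star `*₇` of `V ⊂ ℝ⁸` (volume form `e^{1⋯7}`), acting on forms on `ℝ⁸`
annihilated by `i(e₀)`. -/
def star7 (α : Form K 8) : Form K 8 :=
  fun t => if (0 : Fin 8) ∈ t then 0 else signMerge (Vset \ t) t * α (Vset \ t)

/-- `α` is (the pullback of) a form on `V`, i.e. `i(e₀) α = 0`. -/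
def onV (α : Form K 8) : Prop := ∀ s, (0 : Fin 8) ∈ s → α s = 0

/-- `λ²(α) = ½ (e⁰ ∧ α + i(α♯) φ)` for `α ∈ V*`. -/
def lambda2 (α : Form K 8) : Form K 8 :=
  (2 : K)⁻¹ • (wedge (e1 0) α + iprod (sharp1 α) phi8)

/-- `λ⁴(α) = (1/√8) (e⁰ ∧ i(α♯) *₇φ − α ∧ φ)` for `α ∈ V*`. -/
def lambda4 (α : Form K 8) : Form K 8 :=
  (algebraMap ℝ K (Real.sqrt 8))⁻¹ • (wedge (e1 0) (iprod (sharp1 α) psi8) - wedge α phi8)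

/-- `λ⁶(α) = *₈ λ²(α)` for `α ∈ V*`. -/
def lambda6 (α : Form K 8) : Form K 8 := hstar (lambda2 α)

/-- The projection `π²₇(α) = (α + *₈(Φ ∧ α))/4` onto `Λ²₇`. -/
def pi27 (α : Form K 8) : Form K 8 := (4 : K)⁻¹ • (α + hstar (wedge Phi8 α))

/-- The projection `π⁴₇(β) = Σ_{μ=1}^{7} ⟨β, λ⁴(e^μ)⟩ λ⁴(e^μ)` onto `Λ⁴₇`. -/
def pi47 (β : Form K 8) : Form K 8 :=
  ∑ μ : Fin 7, inner' β (lambda4 (e1 μ.succ)) • lambda4 (e1 μ.succ)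

/-- `τ(u₀,u₁,u₂,u₃) = Σ_{μ=1}^{7} λ⁴(e^μ)(u₀,u₁,u₂,u₃) ⬝ λ⁴(e^μ) = π⁴₇(u₀♭∧u₁♭∧u₂♭∧u₃♭)`. -/
def tau4 (u : Fin 4 → (Fin 8 → K)) : Form K 8 :=
  ∑ μ : Fin 7, evalForm (lambda4 (e1 μ.succ)) u • lambda4 (e1 μ.succ)

/-- Partial derivative `∂f^a/∂x^j` at `x`. -/
def pd {m p : ℕ} (f : (Fin m → ℝ) → (Fin p → ℝ)) (x : Fin m → ℝ) (j : Fin m) (a : Fin p) : ℝ :=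
  fderiv ℝ f x (Pi.single j 1) a


/-- Integer models of the operations, for evaluation in the kernel. -/
def sgnZ (s t : Finset (Fin 7)) : ℤ :=
  (-1 : ℤ) ^ (((s ×ˢ t).filter (fun p => p.2 < p.1)).card)

def wedgeZ (a b : Finset (Fin 7) → ℤ) (u : Finset (Fin 7)) : ℤ :=
  ∑ s ∈ u.powerset, if a s = 0 then 0 else if b (u \ s) = 0 then 0 else
    sgnZ s (u \ s) * a s * b (u \ s)

def hstarZ (a : Finset (Fin 7) → ℤ) (t : Finset (Fin 7)) : ℤ :=
  if a tᶜ = 0 then 0 else sgnZ tᶜ t * a tᶜ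

def iprodBZ (μ : Fin 7) (a : Finset (Fin 7) → ℤ) (t : Finset (Fin 7)) : ℤ :=
  if μ ∈ t then 0
    else if a (insert μ t) = 0 then 0
    else (-1 : ℤ) ^ ((t.filter (fun j => j < μ)).card) * a (insert μ t)

def e1Z (i : Fin 7) (s : Finset (Fin 7)) : ℤ := if s = {i} then 1 else 0

def phiZ (s : Finset (Fin 7)) : ℤ :=
  if s = ({0, 1, 2} : Finset (Fin 7)) then 1
  else if s = ({0, 3, 4} : Finset (Fin 7)) then 1
  else if s = ({0, 5, 6} : Finset (Fin 7)) then 1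
  else if s = ({1, 3, 5} : Finset (Fin 7)) then 1
  else if s = ({1, 4, 6} : Finset (Fin 7)) then -1
  else if s = ({2, 3, 6} : Finset (Fin 7)) then -1
  else if s = ({2, 4, 5} : Finset (Fin 7)) then -1
  else 0

def psiZ (s : Finset (Fin 7)) : ℤ :=
  if s = ({3, 4, 5, 6} : Finset (Fin 7)) then 1
  else if s = ({1, 2, 5, 6} : Finset (Fin 7)) then 1
  else if s = ({1, 2, 3, 4} : Finset (Fin 7)) then 1
  else if s = ({0, 2, 4, 6} : Finset (Fin 7)) then 1
  else if s = ({0, 2, 3, 5} : Finset (Fin 7)) then -1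
  else if s = ({0, 1, 4, 5} : Finset (Fin 7)) then -1
  else if s = ({0, 1, 3, 6} : Finset (Fin 7)) then -1
  else 0

/-- Coefficientwise cast. -/
def cst (a : Finset (Fin 7) → ℤ) : Form ℝ 7 := fun s => (a s : ℝ)

theorem sgn_cast (s t : Finset (Fin 7)) : (signMerge s t : ℝ) = (sgnZ s t : ℝ) := by
  simp [signMerge, sgnZ]

theorem wedge_cast (a b : Finset (Fin 7) → ℤ) : wedge (cst a) (cst b) = cst (wedgeZ a b) := by
  funext u
  simp only [wedge, cst, wedgeZ, Int.cast_sum]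
  refine Finset.sum_congr rfl fun s _ => ?_
  rw [sgn_cast]
  split_ifs with h1 h2
  · simp [h1]
  · simp [h2]
  · push_cast; rfl

theorem hstar_cast (a : Finset (Fin 7) → ℤ) : hstar (cst a) = cst (hstarZ a) := by
  funext u
  simp only [hstar, cst, hstarZ]
  rw [sgn_cast]
  split_ifs with h1
  · simp [h1]
  · push_cast; rfl

theorem iprodB_cast (μ : Fin 7) (a : Finset (Fin 7) → ℤ) :
    iprodB μ (cst a) = cst (iprodBZ μ a) := by
  funext u
  simp only [iprodB, cst, iprodBZ]
  split_ifs with h1 h2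
  · simp
  · simp [h2]
  · push_cast; rfl

theorem e1_cast (i : Fin 7) : (e1 i : Form ℝ 7) = cst (e1Z i) := by
  funext s; simp [e1, cst, e1Z]

theorem phi_cast : (phi7 : Form ℝ 7) = cst phiZ := by
  funext s; simp only [phi7, cst, phiZ]; push_cast; rfl

theorem psi_cast : (psi7 : Form ℝ 7) = cst psiZ := by
  funext s; simp only [psi7, cst, psiZ]; push_cast; rfl

theorem wedge_iprod (α β : Form ℝ 7) (u : Fin 7 → ℝ) :
    wedge α (iprod u β) = ∑ μ, u μ • wedge α (iprodB μ β) := by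
  funext t
  simp only [wedge, iprod, Finset.sum_apply, Pi.smul_apply, smul_eq_mul, Finset.mul_sum]
  rw [Finset.sum_comm]
  refine Finset.sum_congr rfl fun _ _ => Finset.sum_congr rfl fun _ _ => by ring

theorem wedge_flat (β : Form ℝ 7) (u : Fin 7 → ℝ) :
    wedge (flat u) β = ∑ μ, u μ • wedge (e1 μ) β := by
  funext t
  simp only [wedge, flat, Finset.sum_apply, Pi.smul_apply, smul_eq_mul, Finset.mul_sum,
    Finset.sum_mul]
  rw [Finset.sum_comm]
  refine Finset.sum_congr rfl fun _ _ => Finset.sum_congr rfl fun _ _ => by ring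

theorem hstar_flat (u : Fin 7 → ℝ) : hstar (flat u) = ∑ μ, u μ • hstar (e1 μ) := by
  funext t
  simp only [hstar, flat, Finset.sum_apply, Pi.smul_apply, smul_eq_mul, Finset.mul_sum]
  refine Finset.sum_congr rfl fun _ _ => by ring

theorem hstar_iprod (β : Form ℝ 7) (u : Fin 7 → ℝ) :
    hstar (iprod u β) = ∑ μ, u μ • hstar (iprodB μ β) := by
  funext t
  simp only [hstar, iprod, Finset.sum_apply, Pi.smul_apply, smul_eq_mul, Finset.mul_sum]
  refine Finset.sum_congr rfl fun _ _ => by ring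

/-- Sparse integer forms: a list of monomials with coefficients. -/
def formL : List (Finset (Fin 7) × ℤ) → Finset (Fin 7) → ℤ
  | [], _ => 0
  | p :: L, s => (if s = p.1 then p.2 else 0) + formL L s

def wedgeL (b : Finset (Fin 7) → ℤ) : List (Finset (Fin 7) × ℤ) → Finset (Fin 7) → ℤ
  | [], _ => 0
  | p :: L, u => (if p.1 ⊆ u then
      (if b (u \ p.1) = 0 then 0 else sgnZ p.1 (u \ p.1) * p.2 * b (u \ p.1)) else 0) +
      wedgeL b L u

theorem wedgeZ_eq (a b : Finset (Fin 7) → ℤ) (u : Finset (Fin 7)) :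
    wedgeZ a b u = ∑ s ∈ u.powerset, sgnZ s (u \ s) * a s * b (u \ s) := by
  refine Finset.sum_congr rfl fun s _ => ?_
  split_ifs with h1 h2
  · simp [h1]
  · simp [h2]
  · rfl

theorem wedgeZ_formL (b : Finset (Fin 7) → ℤ) (L : List (Finset (Fin 7) × ℤ))
    (u : Finset (Fin 7)) : wedgeZ (formL L) b u = wedgeL b L u := by
  rw [wedgeZ_eq]
  induction L with
  | nil => simp [formL, wedgeL]
  | cons p L ih =>
    simp only [formL, wedgeL, mul_add, add_mul, Finset.sum_add_distrib, ih]
    congr 1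
    simp only [mul_ite, ite_mul, mul_zero, zero_mul, Finset.sum_ite_eq', Finset.mem_powerset]
    split_ifs with h1 h2
    · simp [h2]
    · rfl
    · rfl

def phiL : List (Finset (Fin 7) × ℤ) :=
  [({0, 1, 2}, 1), ({0, 3, 4}, 1), ({0, 5, 6}, 1), ({1, 3, 5}, 1),
   ({1, 4, 6}, -1), ({2, 3, 6}, -1), ({2, 4, 5}, -1)]

def psiL : List (Finset (Fin 7) × ℤ) :=
  [({3, 4, 5, 6}, 1), ({1, 2, 5, 6}, 1), ({1, 2, 3, 4}, 1), ({0, 2, 4, 6}, 1),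
   ({0, 2, 3, 5}, -1), ({0, 1, 4, 5}, -1), ({0, 1, 3, 6}, -1)]

theorem phiZ_eq : phiZ = formL phiL := by
  have h : ∀ s, phiZ s = formL phiL s := by decide +kernel
  exact funext h

theorem psiZ_eq : psiZ = formL psiL := by
  have h : ∀ s, psiZ s = formL psiL s := by decide +kernel
  exact funext h

theorem e1Z_eq (i : Fin 7) : e1Z i = formL [({i}, 1)] := by
  funext s; simp [e1Z, formL]

theorem wedge_phiZ (b : Finset (Fin 7) → ℤ) (u : Finset (Fin 7)) :
    wedgeZ phiZ b u = wedgeL b phiL u := by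
  rw [phiZ_eq, wedgeZ_formL]

theorem wedge_psiZ (b : Finset (Fin 7) → ℤ) (u : Finset (Fin 7)) :
    wedgeZ psiZ b u = wedgeL b psiL u := by
  rw [psiZ_eq, wedgeZ_formL]

theorem wedge_e1Z (i : Fin 7) (b : Finset (Fin 7) → ℤ) (u : Finset (Fin 7)) :
    wedgeZ (e1Z i) b u = wedgeL b [({i}, 1)] u := by
  rw [e1Z_eq, wedgeZ_formL]

theorem key1 (μ : Fin 7) (t : Finset (Fin 7)) :
    wedgeZ phiZ (iprodBZ μ psiZ) t = -4 * hstarZ (e1Z μ) t := by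
  have h : ∀ (μ : Fin 7) (t : Finset (Fin 7)),
      wedgeL (iprodBZ μ psiZ) phiL t = -4 * hstarZ (e1Z μ) t := by
    decide +kernel
  rw [wedge_phiZ, h]

theorem key2 (μ : Fin 7) (t : Finset (Fin 7)) :
    wedgeZ psiZ (iprodBZ μ phiZ) t = 3 * hstarZ (e1Z μ) t := by
  have h : ∀ (μ : Fin 7) (t : Finset (Fin 7)),
      wedgeL (iprodBZ μ phiZ) psiL t = 3 * hstarZ (e1Z μ) t := by
    decide +kernel
  rw [wedge_psiZ, h]

theorem key3 (μ : Fin 7) (t : Finset (Fin 7)) :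
    wedgeZ phiZ (iprodBZ μ phiZ) t = 2 * hstarZ (iprodBZ μ phiZ) t := by
  have h : ∀ (μ : Fin 7) (t : Finset (Fin 7)),
      wedgeL (iprodBZ μ phiZ) phiL t = 2 * hstarZ (iprodBZ μ phiZ) t := by
    decide +kernel
  rw [wedge_phiZ, h]

theorem key4 (μ : Fin 7) (t : Finset (Fin 7)) :
    wedgeZ phiZ (iprodBZ μ phiZ) t = 2 * wedgeZ (e1Z μ) psiZ t := by
  have h : ∀ (μ : Fin 7) (t : Finset (Fin 7)),
      hstarZ (iprodBZ μ phiZ) t = wedgeL psiZ [({μ}, 1)] t := by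
    decide +kernel
  rw [key3, wedge_e1Z, h]

theorem lift_key (u : Fin 7 → ℝ) (c : ℤ) (a b : Fin 7 → Finset (Fin 7) → ℤ)
    (h : ∀ μ t, a μ t = c * b μ t) :
    ∑ μ, u μ • cst (a μ) = (c : ℝ) • ∑ μ, u μ • cst (b μ) := by
  rw [Finset.smul_sum]
  refine Finset.sum_congr rfl fun μ _ => ?_
  funext t
  simp only [cst, Pi.smul_apply, smul_eq_mul, h]
  push_cast
  ring

/-- Lemma 3.1.  For every `u ∈ ℝ⁷`:
`φ ∧ i(u) *₇φ = -4 *₇(u♭)`,  `*₇φ ∧ i(u)φ = 3 *₇(u♭)`,  and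
`φ ∧ i(u)φ = 2 *₇(i(u)φ) = 2 u♭ ∧ *₇φ`. -/
theorem statement2 (u : Fin 7 → ℝ) :
    wedge phi7 (iprod u psi7) = (-4 : ℝ) • hstar (flat u) ∧
    wedge psi7 (iprod u phi7) = (3 : ℝ) • hstar (flat u) ∧
    wedge phi7 (iprod u phi7) = (2 : ℝ) • hstar (iprod u phi7) ∧
    wedge phi7 (iprod u phi7) = (2 : ℝ) • wedge (flat u) psi7 := by
  rw [wedge_iprod, wedge_iprod, wedge_iprod, wedge_flat, hstar_flat, hstar_iprod]
  simp only [phi_cast, psi_cast, e1_cast, iprodB_cast, wedge_cast, hstar_cast]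
  refine ⟨?_, ?_, ?_, ?_⟩
  · exact_mod_cast lift_key u (-4) _ _ key1
  · exact_mod_cast lift_key u 3 _ _ key2
  · exact_mod_cast lift_key u 2 _ _ key3
  · exact_mod_cast lift_key u 2 _ _ key4

end FMpaper
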